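/- arXiv:1607.05776 — 2 statements merged into one kernel-verified Lean document; each statement's English description precedes it below -/
import Mathlib

section
/- With J_n(y) = Σ_T y^{TotalHeight(T)} over rooted labeled trees on n vertices, for every n ≥ 2 one has J_n'(1) = n! · Σ_{k=0}^{n−2} n^k / k!; that is, the sum of total heights over all rooted labeled trees on n vertices equals n! · Σ_{k=0}^{n−2} n^k / k!. -/
/-- The type of rooted labeled trees on `n` vertices: a tree on `Fin n` with a root. -/
def RootedLabeledTree (n : ℕ) : Type :=
  {p : SimpleGraph (Fin n) × Fin n // p.1.IsTree}

noncomputable instance (n : ℕ) : Fintype (RootedLabeledTree n) := by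
  unfold RootedLabeledTree; exact Fintype.ofFinite _

/-- The total height of a rooted labeled tree: the sum over all vertices of
the distance to the root. -/
noncomputable def totalHeight {n : ℕ} (T : RootedLabeledTree n) : ℕ :=
  ∑ v : Fin n, T.1.1.dist T.1.2 v

/-- The generating polynomial `J_n(y) = Σ_T y^{TotalHeight(T)}` of rooted labeled
trees on `n` vertices by total height. -/
noncomputable def J (n : ℕ) : Polynomial ℚ :=
  ∑ T : RootedLabeledTree n, Polynomial.X ^ totalHeight T


/-- number of forests with `k` roots and `m` non-roots -/
def FN (k m : ℕ) : ℕ := if m = 0 then 1 else k * (k+m)^(m-1)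

/-- sum of total heights of forests with `k` roots and `m` non-roots -/
def HN (k m : ℕ) : ℕ := k * ∑ d ∈ Finset.range m, m.descFactorial (d+1) * (k+m)^(m-d-1)

lemma FN_rec (k m : ℕ) (hm : 0 < m) :
    ∑ j ∈ Finset.range (m+1), m.choose j * (k^j * FN j (m-j)) = FN k m := by
  obtain ⟨M, rfl⟩ : ∃ M, m = M+1 := ⟨m-1, by omega⟩
  rw [Finset.sum_range_succ']
  have h0 : FN 0 (M+1-0) = 0 := by simp [FN]
  rw [h0]
  have h1 : FN k (M+1) = k * (k+(M+1))^M := by simp [FN]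
  rw [h1, add_pow, Finset.mul_sum]
  simp only [mul_zero, add_zero]
  refine Finset.sum_congr rfl fun i hi => ?_
  have hi' : i ≤ M := by simpa [Nat.lt_succ_iff] using hi
  have key : (M+1).choose (i+1) * FN (i+1) (M+1-(i+1)) = M.choose i * (M+1)^(M-i) := by
    rcases Nat.lt_or_ge i M with h | h
    · obtain ⟨t, rfl⟩ : ∃ t, M = i + 1 + t := ⟨M-i-1, by omega⟩
      have e1 : i + 1 + t + 1 - (i+1) = t+1 := by omega
      have e2 : i + 1 + t - i = t+1 := by omega
      rw [e1, e2]
      have := Nat.add_one_mul_choose_eq (i+1+t) i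
      simp only [FN, Nat.add_eq_zero_iff, one_ne_zero, and_false, if_false, Nat.add_sub_cancel]
      rw [show i + 1 + (t+1) = i+1+t+1 by ring, pow_succ, ← mul_assoc, ← this]
      ring
    · obtain rfl : i = M := by omega
      simp [FN]
  calc _ = k^(i+1) * ((M+1).choose (i+1) * FN (i+1) (M+1-(i+1))) := by ring
    _ = _ := by rw [key]; push_cast; ring

lemma sum_choose_mul (k m N : ℕ) :
    ∑ j ∈ Finset.range (N+1), N.choose j * (j * k^j * m^(N-j)) = N * (k * (k+m)^(N-1)) := by
  rcases N with _ | N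
  · simp
  rw [Finset.sum_range_succ']
  simp only [Nat.add_sub_cancel, zero_mul, mul_zero, add_zero]
  rw [add_pow, Finset.mul_sum, Finset.mul_sum]
  refine Finset.sum_congr rfl fun i hi => ?_
  have := Nat.add_one_mul_choose_eq N i
  rw [Nat.add_sub_add_right]
  calc _ = ((N+1).choose (i+1) * (i+1)) * (k^(i+1) * m^(N-i)) := by ring
    _ = _ := by rw [← this]; push_cast; ring

lemma HN_rec (k m : ℕ) (hm : 0 < m) :
    ∑ j ∈ Finset.range (m+1), m.choose j * (k^j * (HN j (m-j) + m * FN j (m-j))) = HN k m := by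
  have hs : ∑ j ∈ Finset.range (m+1), m.choose j * (k^j * (HN j (m-j) + m * FN j (m-j)))
     = ∑ j ∈ Finset.range (m+1), m.choose j * (k^j * HN j (m-j)) + m * FN k m := by
    rw [← FN_rec k m hm, Finset.mul_sum, ← Finset.sum_add_distrib]
    exact Finset.sum_congr rfl fun _ _ => by ring
  rw [hs]
  have h1 : ∀ j ∈ Finset.range (m+1), m.choose j * (k^j * HN j (m-j)) =
      ∑ d ∈ Finset.range m, m.choose j * (k^j * (j * ((m-j).descFactorial (d+1) * m^(m-j-d-1)))) := by
    intro j hj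
    have hj' : j ≤ m := by simpa [Nat.lt_succ_iff] using hj
    rw [HN, Nat.add_sub_cancel' hj']
    rw [Finset.mul_sum, Finset.mul_sum, Finset.mul_sum]
    refine Finset.sum_subset (by simp) ?_
    intro d _ hd
    have : (m-j).descFactorial (d+1) = 0 := by
      rw [Nat.descFactorial_eq_zero_iff_lt]; simp at hd; omega
    rw [this]; ring
  rw [Finset.sum_congr rfl h1, Finset.sum_comm]
  have h2 : ∀ d ∈ Finset.range m, ∑ j ∈ Finset.range (m+1),
      m.choose j * (k^j * (j * ((m-j).descFactorial (d+1) * m^(m-j-d-1))))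
      = k * (m.descFactorial (d+1+1) * (k+m)^(m-(d+1)-1)) := by
    intro d hd
    have hd' : d < m := by simpa using hd
    have : ∑ j ∈ Finset.range (m+1),
      m.choose j * (k^j * (j * ((m-j).descFactorial (d+1) * m^(m-j-d-1))))
      = m.descFactorial (d+1) * ∑ j ∈ Finset.range ((m-d-1)+1), (m-d-1).choose j * (j * k^j * m^(m-d-1-j)) := by
      rw [Finset.mul_sum]
      symm
      have hsub : Finset.range ((m-d-1)+1) ⊆ Finset.range (m+1) := by
        intro x; simp; omega
      rw [← Finset.sum_subset hsub]
      · refine Finset.sum_congr rfl fun j hj => ?_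
        have hj' : j ≤ m-d-1 := by simpa [Nat.lt_succ_iff] using hj
        have key : m.choose j * (m-j).descFactorial (d+1) = m.descFactorial (d+1) * (m-d-1).choose j := by
          obtain ⟨t, rfl⟩ : ∃ t, m = j + (d+1) + t := ⟨m-d-1-j, by omega⟩
          have e1 : j + (d+1) + t - j = t + (d+1) := by omega
          have e2 : j + (d+1) + t - d - 1 = t + j := by omega
          rw [e1, e2]
          have a1 := Nat.choose_mul_factorial_mul_factorial (n := j+(d+1)+t) (k := j) (by omega)
          rw [e1] at a1
          have a2 := Nat.factorial_mul_descFactorial (n := t+(d+1)) (k := d+1) (by omega)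
          have a3 := Nat.factorial_mul_descFactorial (n := j+(d+1)+t) (k := d+1) (by omega)
          have a4 := Nat.choose_mul_factorial_mul_factorial (n := j+t) (k := j) (by omega)
          rw [Nat.add_sub_cancel_left] at a4
          rw [Nat.add_sub_cancel] at a2
          rw [show j + (d+1)+t-(d+1) = j+t by omega] at a3
          have hp : 0 < j.factorial * t.factorial := by positivity
          refine Nat.eq_of_mul_eq_mul_right hp ?_
          rw [add_comm t j]
          calc _ = (j+(d+1)+t).choose j * j.factorial * (t.factorial * (t+(d+1)).descFactorial (d+1)) := by ring
            _ = (j+(d+1)+t).factorial := by rw [a2, a1]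
            _ = (j+t).factorial * (j+(d+1)+t).descFactorial (d+1) := a3.symm
            _ = _ := by rw [← a4]; ring
        rw [show m - j - d - 1 = m-d-1-j by omega]
        calc _ = (m.descFactorial (d+1) * (m-d-1).choose j) * (j * k^j * m^(m-d-1-j)) := by ring
          _ = _ := by rw [← key]; ring
      · intro j _ hj
        have : (m-j).descFactorial (d+1) = 0 := by
          rw [Nat.descFactorial_eq_zero_iff_lt]; simp at hj; omega
        rw [this]; ring
    rw [this, sum_choose_mul, Nat.descFactorial_succ m (d+1), show m - (d+1) = m-d-1 by omega]
    ring
  rw [Finset.sum_congr rfl h2, HN, Finset.mul_sum]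
  have h3 := Finset.sum_range_succ' (fun d => k * (m.descFactorial (d+1) * (k+m)^(m-d-1))) m
  rw [Finset.sum_range_succ] at h3
  have h4 : m.descFactorial (m+1) = 0 := by rw [Nat.descFactorial_eq_zero_iff_lt]; omega
  rw [h4] at h3
  simp only [zero_mul, mul_zero, add_zero] at h3
  rw [h3]
  congr 1
  simp [FN, hm.ne']
  ring

/-- level of a vertex, given (height minus one) of the non-roots -/
def lev {α β : Type} (h : α → ℕ) : β ⊕ α → ℕ := Sum.elim (fun _ => 0) (fun a => h a + 1)

/-- forests with root set `β` and non-roots `α`: parent function and height minus one -/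
def Forest (α β : Type) : Type :=
  {p : (α → β ⊕ α) × (α → ℕ) // ∀ a, p.2 a = lev p.2 (p.1 a)}

lemma Forest.h_unique {α β : Type} (F G : Forest α β) (hf : F.1.1 = G.1.1) : F.1.2 = G.1.2 := by
  have : ∀ n a, F.1.2 a = n → G.1.2 a = n := by
    intro n
    induction n using Nat.strong_induction_on with
    | _ n ih =>
      intro a ha
      have h1 := F.2 a
      have h2 := G.2 a
      rw [← hf] at h2
      rcases hfa : F.1.1 a with b | a'
      · rw [hfa] at h1 h2
        simp [lev] at h1 h2
        omega
      · rw [hfa] at h1 h2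
        simp [lev] at h1 h2
        have := ih (F.1.2 a') (by omega) a' rfl
        omega
  funext a
  exact (this _ a rfl).symm

instance {α β : Type} [Finite α] [Finite β] : Finite (Forest α β) :=
  Finite.of_injective (fun F : Forest α β => F.1.1) fun F G h =>
    Subtype.ext (Prod.ext h (F.h_unique G h))

noncomputable instance {α β : Type} [Finite α] [Finite β] : Fintype (Forest α β) :=
  Fintype.ofFinite _

/-- total height -/
def Forest.W {α β : Type} [Fintype α] (F : Forest α β) : ℕ := ∑ a, (F.1.2 a + 1)

lemma Forest.nonempty_root {α β : Type} (F : Forest α β) (a : α) : Nonempty β := by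
  have : ∀ n a, F.1.2 a = n → Nonempty β := by
    intro n
    induction n using Nat.strong_induction_on with
    | _ n ih =>
      intro a ha
      have h1 := F.2 a
      rcases hfa : F.1.1 a with b | a'
      · exact ⟨b⟩
      · rw [hfa] at h1
        simp [lev] at h1
        exact ih (F.1.2 a') (by omega) a' rfl
  exact this _ a rfl

/-- forget the partition -/
def unsplit {α : Type} {A : Finset α} : {a // a ∈ A} ⊕ {a // a ∉ A} → α := Sum.elim Subtype.val Subtype.val

lemma unsplit_inj {α : Type} {A : Finset α} : Function.Injective (unsplit (A := A)) := by
  rintro (⟨a, ha⟩ | ⟨a, ha⟩) (⟨b, hb⟩ | ⟨b, hb⟩) h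
  · simp [unsplit] at h; simp [h]
  · simp [unsplit] at h; subst h; exact absurd ha hb
  · simp [unsplit] at h; subst h; exact absurd hb ha
  · simp [unsplit] at h; simp [h]

/-- put a new layer of roots below a forest -/
def glue {α β : Type} [DecidableEq α] (x : Σ A : Finset α, ({a // a ∈ A} → β) × Forest {a // a ∉ A} {a // a ∈ A}) :
    Forest α β :=
  ⟨(fun a => if h : a ∈ x.1 then Sum.inl (x.2.1 ⟨a, h⟩) else Sum.inr (unsplit (x.2.2.1.1 ⟨a, h⟩)),
    fun a => if h : a ∈ x.1 then 0 else x.2.2.1.2 ⟨a, h⟩ + 1), by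
    intro a
    by_cases h : a ∈ x.1
    · simp [h, lev]
    · have h1 := x.2.2.2 ⟨a, h⟩
      simp only [h, dite_false, lev, Sum.elim_inr, add_left_inj]
      rcases hfa : x.2.2.1.1 ⟨a, h⟩ with ⟨b, hb⟩ | ⟨b, hb⟩
      · rw [hfa] at h1
        simp [lev] at h1
        simp [unsplit, hb, h1]
      · rw [hfa] at h1
        simp [lev] at h1
        simp [unsplit, hb, h1]⟩

lemma glue_inj {α β : Type} [DecidableEq α] : Function.Injective (glue (α := α) (β := β)) := by
  rintro ⟨A, g, F⟩ ⟨B, g', F'⟩ h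
  have hh : ∀ a, (glue ⟨A, g, F⟩).1.2 a = (glue ⟨B, g', F'⟩).1.2 a := fun a => by rw [h]
  have hf : ∀ a, (glue ⟨A, g, F⟩).1.1 a = (glue ⟨B, g', F'⟩).1.1 a := fun a => by rw [h]
  have hAB : A = B := by
    ext a
    have := hh a
    simp only [glue] at this
    by_cases h1 : a ∈ A <;> by_cases h2 : a ∈ B <;> simp [h1, h2] at this ⊢
  subst hAB
  have hg : g = g' := by
    funext ⟨a, ha⟩
    have := hf a
    simpa [glue, ha] using this
  have hF : F = F' := by
    apply Subtype.ext
    apply Prod.ext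
    · funext ⟨a, ha⟩
      have := hf a
      simp only [glue, ha, dite_false, Sum.inr.injEq] at this
      exact unsplit_inj this
    · funext ⟨a, ha⟩
      have := hh a
      simpa [glue, ha] using this
  rw [hg, hF]

lemma glue_surj {α β : Type} [DecidableEq α] [Fintype α] : Function.Surjective (glue (α := α) (β := β)) := by
  intro F
  let A : Finset α := Finset.univ.filter fun a => F.1.2 a = 0
  have hA : ∀ a, a ∈ A ↔ F.1.2 a = 0 := by simp [A]
  have h1 : ∀ a : {a // a ∈ A}, ∃ b, F.1.1 a.1 = Sum.inl b := by
    rintro ⟨a, ha⟩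
    have := F.2 a
    rw [(hA a).1 ha] at this
    rcases hfa : F.1.1 a with b | a'
    · exact ⟨b, rfl⟩
    · rw [hfa] at this; simp [lev] at this
  have h2 : ∀ a : {a // a ∉ A}, ∃ x : {a // a ∈ A} ⊕ {a // a ∉ A},
      F.1.1 a.1 = Sum.inr (unsplit x) := by
    rintro ⟨a, ha⟩
    have := F.2 a
    rcases hfa : F.1.1 a with b | a'
    · rw [hfa] at this; simp [lev] at this
      exact absurd ((hA a).2 this) ha
    · by_cases h : a' ∈ A
      · exact ⟨Sum.inl ⟨a', h⟩, rfl⟩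
      · exact ⟨Sum.inr ⟨a', h⟩, rfl⟩
  choose g hg using h1
  choose f hf using h2
  refine ⟨⟨A, g, ⟨(f, fun a => F.1.2 a.1 - 1), ?_⟩⟩, ?_⟩
  · intro a
    have := F.2 a.1
    rw [hf a] at this
    dsimp only
    generalize hfa : f a = x at this ⊢
    rcases x with ⟨b, hb⟩ | ⟨b, hb⟩
    · simp [unsplit, lev, (hA b).1 hb] at this ⊢
      omega
    · have h0 := mt (hA b).2 hb
      simp [unsplit, lev] at this ⊢
      omega
  · apply Subtype.ext
    apply Prod.ext
    · funext a
      by_cases h : a ∈ A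
      · simp [glue, h, hg ⟨a, h⟩]
      · simp [glue, h, hf ⟨a, h⟩]
    · funext a
      have := hA a
      by_cases h : a ∈ A
      · simp [glue, h, this.1 h]
      · simp only [glue, h, dite_false]
        have := mt (hA a).2 h
        omega

lemma glue_W {α β : Type} [DecidableEq α] [Fintype α] (x : Σ A : Finset α, ({a // a ∈ A} → β) × Forest {a // a ∉ A} {a // a ∈ A}) :
    (glue x).W = Fintype.card α + x.2.2.W := by
  have h1 : (glue x).W = Fintype.card α + ∑ a, (glue x).1.2 a := by
    simp [Forest.W, Finset.sum_add_distrib, add_comm]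
  rw [h1]
  congr 1
  rw [← Fintype.sum_subtype_add_sum_subtype (fun a => a ∈ x.1)]
  rw [Finset.sum_eq_zero, zero_add]
  · refine Finset.sum_congr rfl ?_
    rintro ⟨a, ha⟩ _
    simp [glue, ha]
  · rintro ⟨a, ha⟩ _
    simp [glue, ha]

theorem forest_count (m : ℕ) : ∀ (α β : Type) [Fintype α] [Fintype β], Fintype.card α = m →
    Fintype.card (Forest α β) = FN (Fintype.card β) m ∧
    ∑ F : Forest α β, F.W = HN (Fintype.card β) m := by
  classical
  induction m using Nat.strong_induction_on with
  | _ m ih =>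
    intro α β _ _ hα
    have hzero : ∀ (α β : Type) [Fintype α] [Fintype β], Fintype.card α = m → 0 < m → Fintype.card β = 0 →
        Fintype.card (Forest α β) = FN (Fintype.card β) m ∧
        ∑ F : Forest α β, F.W = HN (Fintype.card β) m := by
      intro α β _ _ hα hm hβ
      have hn : Nonempty α := by rw [← Fintype.card_pos_iff]; omega
      obtain ⟨a⟩ := hn
      have hb : IsEmpty β := Fintype.card_eq_zero_iff.1 hβ
      have hE : IsEmpty (Forest α β) := ⟨fun F => (F.nonempty_root a).elim hb.false⟩
      constructor
      · rw [Fintype.card_eq_zero_iff.2 hE, hβ]; simp [FN, hm.ne']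
      · simp [HN]
    rcases Nat.eq_zero_or_pos m with rfl | hm
    · have hE : IsEmpty α := Fintype.card_eq_zero_iff.1 hα
      constructor
      · simp only [FN, if_true]
        rw [Fintype.card_eq_one_iff]
        refine ⟨⟨(isEmptyElim, isEmptyElim), fun a => isEmptyElim a⟩, fun F => ?_⟩
        apply Subtype.ext
        exact Subsingleton.elim _ _
      · simp [Forest.W, HN]
    -- uniform statement for the pieces
    have piece : ∀ A : Finset α,
        Fintype.card (Forest {a // a ∉ A} {a // a ∈ A}) = FN A.card (m - A.card) ∧
        ∑ F : Forest {a // a ∉ A} {a // a ∈ A}, F.W = HN A.card (m - A.card) := by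
      intro A
      have hc : Fintype.card {a // a ∉ A} = m - A.card := by
        rw [Fintype.card_subtype_compl, hα, Fintype.card_coe]
      have hA : Fintype.card {a // a ∈ A} = A.card := Fintype.card_coe A
      have hle : A.card ≤ m := hα ▸ Finset.card_le_univ A
      rcases Nat.eq_zero_or_pos A.card with h0 | h0
      · have := hzero {a // a ∉ A} {a // a ∈ A} (by omega) hm (by omega)
        rw [hA] at this
        rw [h0] at this ⊢
        exact this
      · have := ih (m - A.card) (by omega) {a // a ∉ A} {a // a ∈ A} hc
        rwa [hA] at this
    let E := Equiv.ofBijective (glue (α := α) (β := β)) ⟨glue_inj, glue_surj⟩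
    have hfun : ∀ A : Finset α, Fintype.card ({a // a ∈ A} → β) = Fintype.card β ^ A.card := by
      intro A; simp
    constructor
    · rw [← Fintype.card_congr E, Fintype.card_sigma]
      simp only [Fintype.card_prod, hfun, (piece _).1]
      rw [← Finset.powerset_univ,
        Finset.sum_powerset_apply_card (fun j => Fintype.card β ^ j * FN j (m-j)), 
        Finset.card_univ, hα]
      simp only [smul_eq_mul]
      exact FN_rec _ _ hm
    · rw [← Equiv.sum_comp E, Fintype.sum_sigma]
      have : ∀ A : Finset α, ∑ y : ({a // a ∈ A} → β) × Forest {a // a ∉ A} {a // a ∈ A}, 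
          (E ⟨A, y⟩).W = Fintype.card β ^ A.card * (HN A.card (m - A.card) + m * FN A.card (m - A.card)) := by
        intro A
        have h1 : ∀ y, (E ⟨A, y⟩).W = m + y.2.W := by
          intro y
          rw [← hα]; exact glue_W ⟨A, y⟩
        simp only [h1]
        rw [Fintype.sum_prod_type]
        simp only [Finset.sum_add_distrib, (piece A).2, Finset.sum_const, Finset.card_univ, (piece A).1,
          hfun, smul_eq_mul]
        ring
      simp only [this]
      rw [← Finset.powerset_univ,
        Finset.sum_powerset_apply_card
          (fun j => Fintype.card β ^ j * (HN j (m-j) + m * FN j (m-j))), 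
        Finset.card_univ, hα]
      simp only [smul_eq_mul]
      exact HN_rec _ _ hm

/-- the graph of a forest with a single root -/
def graphOf {α : Type} (F : Forest α Unit) : SimpleGraph (Unit ⊕ α) where
  Adj u v := (∃ a, u = Sum.inr a ∧ v = F.1.1 a) ∨ (∃ a, v = Sum.inr a ∧ u = F.1.1 a)
  symm := ⟨fun u v h => h.symm⟩
  loopless := ⟨by
    have key : ∀ a, F.1.1 a ≠ Sum.inr a := by
      intro a h
      have := F.2 a
      rw [h] at this
      simp [lev] at this
    rintro u (⟨a, h1, h2⟩ | ⟨a, h1, h2⟩) <;> exact key a (h2.symm.trans h1)⟩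

lemma lev_par {α : Type} (F : Forest α Unit) (a : α) :
    lev F.1.2 (Sum.inr a : Unit ⊕ α) = lev F.1.2 (F.1.1 a) + 1 := by
  rw [← F.2 a]; rfl

lemma graphOf_adj_par {α : Type} (F : Forest α Unit) (a : α) :
    (graphOf F).Adj (F.1.1 a) (Sum.inr a) := Or.inr ⟨a, rfl, rfl⟩

lemma graphOf_walk {α : Type} (F : Forest α Unit) :
    ∀ (n : ℕ) (v : Unit ⊕ α), lev F.1.2 v = n →
      ∃ p : (graphOf F).Walk (Sum.inl ()) v, p.length = n := by
  intro n
  induction n with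
  | zero =>
    rintro (⟨⟩ | a) h
    · exact ⟨SimpleGraph.Walk.nil, rfl⟩
    · simp [lev] at h
  | succ n ih =>
    rintro (⟨⟩ | a) h
    · simp [lev] at h
    · rw [lev_par] at h
      obtain ⟨p, hp⟩ := ih (F.1.1 a) (by omega)
      exact ⟨p.concat (graphOf_adj_par F a), by simp [hp]⟩

lemma graphOf_connected {α : Type} (F : Forest α Unit) : (graphOf F).Connected := by
  rw [SimpleGraph.connected_iff_exists_forall_reachable]
  exact ⟨Sum.inl (), fun v => (graphOf_walk F _ v rfl).choose.reachable⟩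

lemma graphOf_lev_le {α : Type} (F : Forest α Unit) {u v : Unit ⊕ α} (p : (graphOf F).Walk u v) :
    lev F.1.2 v ≤ lev F.1.2 u + p.length := by
  induction p with
  | nil => simp
  | cons h p ih =>
    rw [SimpleGraph.Walk.length_cons]
    rcases h with ⟨a, rfl, rfl⟩ | ⟨a, rfl, rfl⟩
    · have := lev_par F a; omega
    · have := lev_par F a; omega

lemma graphOf_dist {α : Type} (F : Forest α Unit) (v : Unit ⊕ α) :
    (graphOf F).dist (Sum.inl ()) v = lev F.1.2 v := by
  apply le_antisymm
  · obtain ⟨p, hp⟩ := graphOf_walk F _ v rfl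
    rw [← hp]; exact SimpleGraph.dist_le p
  · obtain ⟨p, hp⟩ := (graphOf_connected F).exists_walk_length_eq_dist (Sum.inl ()) v
    have := graphOf_lev_le F p
    rw [← hp]; simpa [lev] using this

lemma graphOf_isTree {α : Type} [Finite α] (F : Forest α Unit) : (graphOf F).IsTree := by
  rw [SimpleGraph.isTree_iff_connected_and_card]
  refine ⟨graphOf_connected F, ?_⟩
  let g : α → Sym2 (Unit ⊕ α) := fun a => s(Sum.inr a, F.1.1 a)
  have hg : Function.Injective g := by
    intro a b h
    simp only [g, Sym2.eq_iff] at h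
    rcases h with ⟨h, _⟩ | ⟨h1, h2⟩
    · exact Sum.inr_injective h
    · have ha := lev_par F a
      have hb := lev_par F b
      rw [← h1] at hb
      rw [h2] at ha
      omega
  have hr : (graphOf F).edgeSet = Set.range g := by
    ext e
    induction e with
    | _ u v =>
      rw [SimpleGraph.mem_edgeSet]
      constructor
      · rintro (⟨a, rfl, rfl⟩ | ⟨a, rfl, rfl⟩)
        · exact ⟨a, rfl⟩
        · exact ⟨a, Sym2.eq_swap⟩
      · rintro ⟨a, h⟩
        rw [← SimpleGraph.mem_edgeSet, ← h]
        exact Or.inl ⟨a, rfl, rfl⟩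
  rw [hr, Nat.card_range_of_injective hg, Nat.card_sum]
  simp [add_comm]

lemma graphOf_inj {α : Type} : Function.Injective (graphOf (α := α)) := by
  intro F G h
  have hl : ∀ v, lev F.1.2 v = lev (β := Unit) G.1.2 v := fun v => by
    rw [← graphOf_dist, ← graphOf_dist, h]
  have hh : F.1.2 = G.1.2 := by
    funext a
    simpa [lev] using hl (Sum.inr a)
  have hf : F.1.1 = G.1.1 := by
    funext a
    have h1 := graphOf_adj_par F a
    have h2 := lev_par F a
    rw [h] at h1
    rcases h1 with ⟨b, hb, hb'⟩ | ⟨b, hb, hb'⟩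
    · have h3 := lev_par G b
      rw [← hb, ← hb', ← hl, ← hl] at h3
      omega
    · obtain rfl : a = b := Sum.inr_injective hb
      exact hb'
  exact Subtype.ext (Prod.ext hf hh)

lemma graphOf_surj {α : Type} (G : SimpleGraph (Unit ⊕ α)) (hG : G.IsTree) :
    ∃ F, graphOf F = G := by
  have hp : ∀ a : α, ∃ v, G.Adj v (Sum.inr a) ∧
      G.dist (Sum.inl ()) (Sum.inr a) = G.dist (Sum.inl ()) v + 1 := by
    intro a
    obtain ⟨p, hp⟩ := hG.connected.exists_walk_length_eq_dist (Sum.inr a) (Sum.inl ())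
    cases p with
    | cons h p =>
      rename_i v
      refine ⟨v, h.symm, ?_⟩
      rw [SimpleGraph.Walk.length_cons] at hp
      have h1 := SimpleGraph.dist_le p
      have h2 := hG.connected.dist_triangle (u := Sum.inl ()) (v := v) (w := Sum.inr a)
      rw [SimpleGraph.dist_eq_one_iff_adj.2 h.symm] at h2
      rw [SimpleGraph.dist_comm] at hp h1
      omega
  choose f hf hd using hp
  have hlev : ∀ v, lev (fun a => G.dist (Sum.inl ()) (Sum.inr a) - 1) v = G.dist (Sum.inl ()) v := by
    rintro (⟨⟩ | a)
    · simp [lev]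
    · have := hd a
      simp only [lev, Sum.elim_inr]
      omega
  let F : Forest α Unit := ⟨(f, fun a => G.dist (Sum.inl ()) (Sum.inr a) - 1), by
    intro a
    have h1 := hlev (f a)
    have h2 := hd a
    dsimp only
    omega⟩
  refine ⟨F, ?_⟩
  have hle : graphOf F ≤ G := by
    rintro u v (⟨a, rfl, rfl⟩ | ⟨a, rfl, rfl⟩)
    · exact (hf a).symm
    · exact hf a
  exact le_antisymm hle
    ((SimpleGraph.isTree_iff_minimal_connected.1 hG).2 (graphOf_connected F) hle)

lemma iso_dist {V W : Type} {G : SimpleGraph V} {H : SimpleGraph W} (e : G ≃g H)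
    (hG : G.Connected) (u v : V) : H.dist (e u) (e v) = G.dist u v := by
  have hH : H.Connected := e.connected_iff.1 hG
  apply le_antisymm
  · obtain ⟨p, hp⟩ := hG.exists_walk_length_eq_dist u v
    rw [← hp, ← SimpleGraph.Walk.length_map e.toHom p]
    exact SimpleGraph.dist_le _
  · obtain ⟨p, hp⟩ := hH.exists_walk_length_eq_dist (e u) (e v)
    rw [← hp, ← SimpleGraph.Walk.length_map e.symm.toHom p]
    have := SimpleGraph.dist_le (p.map e.symm.toHom)
    simpa using this

open Classical in
lemma sum_trees_at (m : ℕ) (r : Fin (m+1)) :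
    ∑ G : {G : SimpleGraph (Fin (m+1)) // G.IsTree}, ∑ v, G.1.dist r v = HN 1 m := by
  let e : Fin (m+1) ≃ Unit ⊕ Fin m :=
    (finSuccEquiv' r).trans ((Equiv.optionEquivSumPUnit (Fin m)).trans (Equiv.sumComm _ _))
  have her : e r = Sum.inl () := by simp [e]
  let φ : Forest (Fin m) Unit → {G : SimpleGraph (Fin (m+1)) // G.IsTree} := fun F =>
    ⟨(graphOf F).comap e, (SimpleGraph.Iso.comap e (graphOf F)).isTree_iff.2 (graphOf_isTree F)⟩
  have hφ : Function.Bijective φ := by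
    constructor
    · intro F F' h
      have h1 : (graphOf F).comap e = (graphOf F').comap e := congrArg Subtype.val h
      apply graphOf_inj
      ext u v
      have h2 : ((graphOf F).comap e).Adj (e.symm u) (e.symm v) ↔
        ((graphOf F').comap e).Adj (e.symm u) (e.symm v) := by rw [h1]
      simpa using h2
    · rintro ⟨G, hG⟩
      obtain ⟨F, hF⟩ := graphOf_surj (G.comap e.symm)
        ((SimpleGraph.Iso.comap e.symm G).isTree_iff.2 hG)
      refine ⟨F, Subtype.ext ?_⟩
      simp only [φ, hF]
      ext u v
      simp
  have hc : ∑ F : Forest (Fin m) Unit, F.W = HN 1 m := by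
    simpa using (forest_count m (Fin m) Unit (by simp)).2
  rw [← hc]
  symm
  refine Fintype.sum_bijective φ hφ _ _ fun F => ?_
  have h1 : ∀ v, (φ F).1.dist r v = lev F.1.2 (e v) := by
    intro v
    rw [← graphOf_dist, ← her]
    exact (iso_dist (SimpleGraph.Iso.comap e (graphOf F)) (φ F).2.connected r v).symm
  simp only [h1]
  rw [Equiv.sum_comp e (lev F.1.2), Fintype.sum_sum_type]
  simp [lev, Forest.W]

open Classical in
lemma sum_totalHeight (m : ℕ) :
    ∑ T : RootedLabeledTree (m+1), totalHeight T = (m+1) * HN 1 m := by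
  let ψ : RootedLabeledTree (m+1) ≃ Fin (m+1) × {G : SimpleGraph (Fin (m+1)) // G.IsTree} :=
    { toFun := fun T => (T.1.2, ⟨T.1.1, T.2⟩)
      invFun := fun x => ⟨(x.2.1, x.1), x.2.2⟩
      left_inv := fun _ => rfl
      right_inv := fun _ => rfl }
  rw [Fintype.sum_equiv ψ totalHeight (fun x => ∑ v, x.2.1.dist x.1 v) (fun T => rfl)]
  rw [Fintype.sum_prod_type]
  simp [sum_trees_at]

/-- `J_n'(1) = n! · Σ_{k=0}^{n−2} n^k/k!` for `n ≥ 2`: the sum of total heights over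
all rooted labeled trees on `n` vertices equals `n! · Σ_{k=0}^{n−2} n^k/k!`. -/
theorem J_deriv_eval_one (n : ℕ) (hn : 2 ≤ n) :
    (Polynomial.derivative (J n)).eval 1 =
      (n.factorial : ℚ) * ∑ k ∈ Finset.range (n - 1), (n : ℚ) ^ k / (k.factorial : ℚ) := by
  obtain ⟨m, rfl⟩ : ∃ m, n = m + 1 := ⟨n - 1, by omega⟩
  have h1 : (Polynomial.derivative (J (m+1))).eval 1 = ((∑ T : RootedLabeledTree (m+1), totalHeight T : ℕ) : ℚ) := by
    simp [J, Polynomial.eval_finsetSum, Polynomial.derivative_X_pow]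
  rw [h1, sum_totalHeight, HN, Nat.add_sub_cancel]
  push_cast
  rw [← Finset.sum_range_reflect, one_mul, Finset.mul_sum, Finset.mul_sum]
  refine Finset.sum_congr rfl fun d hd => ?_
  have hd' : d < m := by simpa using hd
  have h2 := Nat.factorial_mul_descFactorial (n := m) (k := m - d) (by omega)
  rw [show m - (m - d) = d by omega] at h2
  rw [show m - 1 - d + 1 = m - d by omega, show m - (m - 1 - d) - 1 = d by omega]
  rw [Nat.factorial_succ, ← h2]
  have : (d.factorial : ℚ) ≠ 0 := by positivity
  push_cast
  field_simp
  ring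
end

section
/- For n ≥ 2, the quantity n! Σ_{k=0}^{n−2} n^k/k! equals (n−1)! Σ_{k=0}^{n−2} n^(k+1)/k!·(1/n)·n = n · (n−1)! Σ_{k=0}^{n−2} n^k/k!; in particular a(n) := (n−1)! Σ_{k=0}^{n−2} n^k/k! satisfies n·a(n) = Σ_T TotalHeight(T), the total of all heights over rooted labeled trees on n vertices, so a(2)=1, a(3)=8, a(4)=78, a(5)=944. -/
/-- OEIS A000435: `a(n) = (n−1)! · Σ_{k=0}^{n−2} n^k/k!`. -/
noncomputable def a (n : ℕ) : ℚ :=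
  ((n - 1).factorial : ℚ) * ∑ k ∈ Finset.range (n - 1), (n : ℚ) ^ k / (k.factorial : ℚ)


namespace HT
open Finset

/-- number of forests with `r` roots and `u` other vertices -/
def gc (r u : ℕ) : ℕ := if u = 0 then 1 else r * (r + u) ^ (u - 1)

/-- total height of forests with `r` roots and `u` other vertices -/
def hc (r u : ℕ) : ℕ := r * ∑ d ∈ range u, u.descFactorial (d + 1) * (r + u) ^ (u - (d + 1))

lemma gc_step (w i : ℕ) (hi : i ≤ w) :
    (w + 1).choose (i + 1) * gc (i + 1) (w - i) = w.choose i * (w + 1) ^ (w - i) := by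
  have h := Nat.add_one_mul_choose_eq w i
  rcases Nat.eq_or_lt_of_le hi with rfl | hlt
  · simp [gc]
  · obtain ⟨t, rfl⟩ : ∃ t, w = i + t + 1 := ⟨w - i - 1, by omega⟩
    have e1 : i + t + 1 - i = t + 1 := by omega
    have e2 : i + 1 + (t + 1) = i + t + 1 + 1 := by omega
    simp only [gc, e1, e2]
    rw [if_neg (by omega), Nat.add_sub_cancel, pow_succ, ← mul_assoc, ← h]
    ring

lemma gc_rec (r w : ℕ) :
    gc r (w + 1) = ∑ j ∈ range (w + 2), (w + 1).choose j * (r ^ j * gc j (w + 1 - j)) := by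
  rw [sum_range_succ']
  have h0 : gc 0 (w + 1 - 0) = 0 := by simp [gc]
  rw [h0]
  have : ∀ i ∈ range (w + 1), (w + 1).choose (i + 1) * (r ^ (i + 1) * gc (i + 1) (w + 1 - (i + 1)))
      = r * (r ^ i * (w + 1) ^ (w - i) * w.choose i) := by
    intro i hi
    have hi' : i ≤ w := by simpa [Nat.lt_succ_iff] using hi
    have := gc_step w i hi'
    rw [Nat.add_sub_add_right]
    linear_combination r ^ (i + 1) * this
  have hp := add_pow r (w + 1) w
  simp only [Nat.cast_id] at hp
  rw [sum_congr rfl this, ← mul_sum, ← hp]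
  simp [gc]

lemma choose_desc (w i e : ℕ) (he : e ≤ w) :
    w.choose i * (w - i).descFactorial e = w.descFactorial e * (w - e).choose i := by
  rw [Nat.descFactorial_eq_factorial_mul_choose, Nat.descFactorial_eq_factorial_mul_choose]
  rcases le_or_gt (i + e) w with h | h
  · obtain ⟨t, rfl⟩ := Nat.exists_eq_add_of_le h
    have h1 := Nat.choose_mul (n := i + e + t) (k := i + e) (s := i) (by omega)
    have h2 := Nat.choose_mul (n := i + e + t) (k := i + e) (s := e) (by omega)
    have e1 : i + e - i = e := by omega
    have e2 : i + e - e = i := by omega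
    rw [e1] at h1; rw [e2] at h2
    have h3 : (i + e).choose i = (i + e).choose e := Nat.choose_symm_add
    rw [h3, h2] at h1
    linear_combination e.factorial * h1.symm
  · rw [Nat.choose_eq_zero_of_lt (show w - e < i by omega)]
    rcases lt_or_ge w i with h' | h'
    · rw [Nat.choose_eq_zero_of_lt h']; simp
    · rw [Nat.choose_eq_zero_of_lt (show w - i < e by omega)]; simp

lemma hc_rec (r w : ℕ) :
    hc r (w + 1) = ∑ j ∈ range (w + 2),
      (w + 1).choose j * (r ^ j * (hc j (w + 1 - j) + (w + 1) * gc j (w + 1 - j))) := by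
  have hs : ∑ j ∈ range (w + 2), (w + 1).choose j * (r ^ j * hc j (w + 1 - j))
      = r * ∑ d ∈ range w, (w + 1).descFactorial (d + 2) * (r + (w + 1)) ^ (w - (d + 1)) := by
    rw [sum_range_succ']
    have h0 : hc 0 (w + 1 - 0) = 0 := by simp [hc]
    rw [h0, mul_sum]
    have : ∀ i ∈ range (w + 1),
        (w + 1).choose (i + 1) * (r ^ (i + 1) * hc (i + 1) (w + 1 - (i + 1)))
        = ∑ d ∈ range w, r * ((w + 1).descFactorial (d + 2) *
          (r ^ i * (w + 1) ^ (w - (d + 1) - i) * (w - (d + 1)).choose i)) := by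
      intro i hi
      have hi' : i ≤ w := by simpa [Nat.lt_succ_iff] using hi
      have hx : hc (i + 1) (w - i) = (i + 1) * ∑ d ∈ range w,
          (w - i).descFactorial (d + 1) * (w + 1) ^ (w - (d + 1) - i) := by
        unfold hc
        congr 1
        have e : i + 1 + (w - i) = w + 1 := by omega
        rw [e]
        have : range (w - i) ⊆ range w := by
          intro x; simp only [mem_range]; omega
        rw [← sum_subset this]
        · apply sum_congr rfl
          intro d _
          congr 2
          omega
        · intro x _ hx
          rw [Nat.descFactorial_of_lt (by simp only [mem_range] at hx; omega)]
          simp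
      rw [Nat.add_sub_add_right, hx, mul_sum, mul_sum, mul_sum]
      apply sum_congr rfl
      intro d hd
      have hd' : d + 1 ≤ w := by simpa using hd
      have h1 := Nat.add_one_mul_choose_eq w i
      have h2 := choose_desc w i (d + 1) hd'
      rw [Nat.succ_descFactorial_succ]
      linear_combination r ^ (i + 1) * (w + 1) ^ (w - (d + 1) - i) *
        ((w - i).descFactorial (d + 1) * h1.symm + (w + 1) * h2)
    rw [sum_congr rfl this, sum_comm]
    simp only [mul_zero, add_zero]
    apply sum_congr rfl
    intro d hd
    have hd' : d + 1 ≤ w := by simpa using hd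
    rw [← mul_sum, ← mul_sum, add_pow]
    congr 2
    symm
    apply sum_subset
    · intro x; simp only [mem_range]; omega
    · intro x _ hx
      rw [Nat.choose_eq_zero_of_lt (by simp only [mem_range] at hx; omega)]
      simp
  have : ∀ j ∈ range (w + 2),
      (w + 1).choose j * (r ^ j * (hc j (w + 1 - j) + (w + 1) * gc j (w + 1 - j)))
      = (w + 1).choose j * (r ^ j * hc j (w + 1 - j)) +
        (w + 1) * ((w + 1).choose j * (r ^ j * gc j (w + 1 - j))) := by
    intros; ring
  rw [sum_congr rfl this, sum_add_distrib, ← mul_sum, ← gc_rec, hs]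
  unfold hc gc
  rw [sum_range_succ']
  simp [mul_add]
  ring

lemma hc_final (n : ℕ) (hn : 2 ≤ n) :
    (n : ℚ) * (((n - 1).factorial : ℚ) * ∑ k ∈ Finset.range (n - 1), (n : ℚ) ^ k / (k.factorial : ℚ))
      = n * (hc 1 (n - 1) : ℚ) := by
  congr 1
  unfold hc
  rw [one_mul, show 1 + (n - 1) = n by omega, mul_sum, ← sum_range_reflect]
  push_cast
  apply sum_congr rfl
  intro d hd
  have hd' : d < n - 1 := by simpa using hd
  have h := Nat.factorial_mul_descFactorial (n := n - 1) (k := d + 1) (by omega)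
  rw [show n - 1 - 1 - d = n - 1 - (d + 1) by omega, ← h]
  have := Nat.factorial_ne_zero (n - 1 - (d + 1))
  push_cast
  field_simp

end HT

namespace HT
open Finset

/-- `h` is the height function of the forest with root set `R`, other vertices `U` and
parent function `p`. -/
def IsHt {V : Type*} (R U : Finset V) (p : V → V) (h : V → ℕ) : Prop :=
  (∀ x ∈ U, (p x ∈ R ∨ p x ∈ U) ∧ h x = h (p x) + 1) ∧ ∀ x, x ∉ U → p x = x ∧ h x = 0

lemma IsHt.unique {V : Type*} {R U : Finset V} {p : V → V} {h h' : V → ℕ}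
    (H : IsHt R U p h) (H' : IsHt R U p h') : h = h' := by
  have : ∀ k x, h x = k → h' x = k := by
    intro k
    induction k with
    | zero =>
      intro x hx
      by_cases hU : x ∈ U
      · have := (H.1 x hU).2; omega
      · exact (H'.2 x hU).2
    | succ k ih =>
      intro x hx
      by_cases hU : x ∈ U
      · have h1 := (H.1 x hU).2
        have h2 := (H'.1 x hU).2
        have := ih (p x) (by omega)
        omega
      · have := (H.2 x hU).2; omega
  funext x
  exact (this _ x rfl).symm

open Classical in
/-- The height function (zero if there is none). -/
noncomputable def ht {V : Type*} (R U : Finset V) (p : V → V) : V → ℕ :=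
  if H : ∃ h, IsHt R U p h then H.choose else 0

lemma IsHt.ht_eq {V : Type*} {R U : Finset V} {p : V → V} {h : V → ℕ}
    (H : IsHt R U p h) : ht R U p = h := by
  have hex : ∃ h, IsHt R U p h := ⟨h, H⟩
  unfold ht
  rw [dif_pos hex]
  exact hex.choose_spec.unique H

open Classical in
/-- The forests with roots `R` and other vertices `U`. -/
noncomputable def F {V : Type*} [Fintype V] (R U : Finset V) : Finset (V → V) :=
  univ.filter fun p => ∃ h, IsHt R U p h

lemma mem_F {V : Type*} [Fintype V] {R U : Finset V} {p : V → V} :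
    p ∈ F R U ↔ ∃ h, IsHt R U p h := by simp [F]

/-- total height -/
noncomputable def tot {V : Type*} [Fintype V] (R U : Finset V) (p : V → V) : ℕ :=
  ∑ x, ht R U p x

section
variable {V : Type*} [Fintype V] [DecidableEq V]

lemma IsHt.down {R U D : Finset V} (hRU : Disjoint R U) {p : V → V} {h : V → ℕ}
    (H : IsHt R U p h) (hD : D = U.filter fun x => p x ∈ R) :
    IsHt D (U \ D) (fun x => if x ∈ D then x else p x) (fun x => h x - 1) := by
  have hR : ∀ x ∈ R, x ∉ U := fun x hx hx' => (Finset.disjoint_left.1 hRU) hx hx'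
  subst hD
  constructor
  · intro x hx
    simp only [mem_sdiff, mem_filter, not_and] at hx
    obtain ⟨hxU, hx2⟩ := hx
    have hx2 := hx2 hxU
    obtain ⟨h1, h2⟩ := H.1 x hxU
    have hpU : p x ∈ U := h1.resolve_left hx2
    have h3 := (H.1 _ hpU).2
    simp only [mem_filter, hx2, and_false, if_false, mem_sdiff]
    refine ⟨?_, by omega⟩
    tauto
  · intro x hx
    simp only [mem_sdiff, mem_filter] at hx
    by_cases hxU : x ∈ U
    · have hxR : p x ∈ R := by tauto
      have h2 := (H.1 x hxU).2
      have h3 := (H.2 _ (hR _ hxR)).2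
      simp [hxU, hxR]; omega
    · have := H.2 x hxU
      simp [hxU, this]

lemma IsHt.up {R U D : Finset V} (hRU : Disjoint R U) (hDU : D ⊆ U) {p q : V → V} {h : V → ℕ}
    (H : IsHt D (U \ D) p h) (hq : ∀ x ∈ D, q x ∈ R) :
    IsHt R U (fun x => if x ∈ D then q x else p x) (fun x => if x ∈ U then h x + 1 else 0) := by
  have hR : ∀ x ∈ R, x ∉ U := fun x hx hx' => (Finset.disjoint_left.1 hRU) hx hx'
  constructor
  · intro x hx
    by_cases hxD : x ∈ D
    · have h1 := hR _ (hq x hxD)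
      have h2 := H.2 x (by simp [hxD])
      simp [hxD, hx, h1, hq x hxD, h2]
    · have h1 := H.1 x (by simp [hx, hxD])
      have h3 : p x ∈ U := by
        rcases h1.1 with h | h
        · exact hDU h
        · exact (mem_sdiff.1 h).1
      simp [hxD, hx, h3, h1.2]
  · intro x hx
    have hxD : x ∉ D := fun h => hx (hDU h)
    have := H.2 x (by simp [hx])
    simp [hxD, hx, this]

/-- The layer decomposition. -/
lemma sum_F (R U : Finset V) (hRU : Disjoint R U) (f : (V → V) → ℕ) (g : Finset V → (V → V) → ℕ)
    (hfg : ∀ D ⊆ U, ∀ p ∈ F R U, D = U.filter (fun x => p x ∈ R) →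
      f p = g D (fun x => if x ∈ D then x else p x)) :
    ∑ p ∈ F R U, f p
      = ∑ D ∈ U.powerset, R.card ^ D.card * ∑ p ∈ F D (U \ D), g D p := by
  have hR : ∀ x ∈ R, x ∉ U := fun x hx hx' => (Finset.disjoint_left.1 hRU) hx hx'
  rw [← sum_fiberwise_of_maps_to (s := F R U) (t := U.powerset)
    (g := fun p => U.filter fun x => p x ∈ R)
    (fun p _ => mem_powerset.2 (filter_subset _ _))]
  apply sum_congr rfl
  intro D hD
  rw [mem_powerset] at hD
  have hcard : (Fintype.piFinset (fun x : V => if x ∈ D then R else {x})).card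
      = R.card ^ D.card := by
    rw [Fintype.card_piFinset]
    have : ∀ x : V, (if x ∈ D then R else {x}).card = if x ∈ D then R.card else 1 := by
      intro x; split_ifs <;> simp
    simp_rw [this]
    rw [prod_ite]
    simp
  rw [← hcard, ← smul_eq_mul, ← sum_const, ← sum_product' (f := fun _ p => g D p)]
  refine sum_nbij' (fun p => (fun x => if x ∈ D then p x else x, fun x => if x ∈ D then x else p x))
    (fun qp x => if x ∈ D then qp.1 x else qp.2 x) ?_ ?_ ?_ ?_ ?_
  · intro p hp
    rw [mem_filter] at hp
    obtain ⟨hp, hpD⟩ := hp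
    obtain ⟨h, H⟩ := mem_F.1 hp
    rw [mem_product]
    refine ⟨?_, mem_F.2 ⟨_, H.down hRU hpD.symm⟩⟩
    rw [Fintype.mem_piFinset]
    intro x
    by_cases hx : x ∈ D
    · simp only [hx, if_true]
      rw [← hpD] at hx
      exact (mem_filter.1 hx).2
    · simp [hx]
  · rintro ⟨q, p⟩ hqp
    rw [mem_product, Fintype.mem_piFinset] at hqp
    obtain ⟨hq, hp⟩ := hqp
    simp only at hq hp
    obtain ⟨h, H⟩ := mem_F.1 hp
    have hq' : ∀ x ∈ D, q x ∈ R := by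
      intro x hx
      have := hq x
      simpa [hx] using this
    rw [mem_filter]
    refine ⟨mem_F.2 ⟨_, H.up hRU hD hq'⟩, ?_⟩
    ext x
    simp only [mem_filter]
    constructor
    · rintro ⟨hxU, hx⟩
      by_contra hxD
      simp only [hxD, if_false] at hx
      have h1 := H.1 x (by simp [hxU, hxD])
      have := hR _ hx
      rcases h1.1 with h | h
      · exact this (hD h)
      · exact this (mem_sdiff.1 h).1
    · intro hx
      simp [hx, hD hx, hq' x hx]
  · intro p _
    funext x
    by_cases hx : x ∈ D <;> simp [hx]
  · rintro ⟨q, p⟩ hqp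
    rw [mem_product, Fintype.mem_piFinset] at hqp
    obtain ⟨hq, hp⟩ := hqp
    simp only at hq hp
    obtain ⟨h, H⟩ := mem_F.1 hp
    ext x
    · by_cases hx : x ∈ D
      · simp [hx]
      · have := hq x
        simp [hx] at this
        simp [hx, this]
    · by_cases hx : x ∈ D
      · have := (H.2 x (by simp [hx])).1
        simp [hx, this]
      · simp [hx]
  · intro p hp
    rw [mem_filter] at hp
    exact hfg D hD p hp.1 hp.2.symm

lemma F_empty_left {U : Finset V} (hU : U.Nonempty) : F (∅ : Finset V) U = ∅ := by
  rw [eq_empty_iff_forall_notMem]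
  intro p hp
  obtain ⟨h, H⟩ := mem_F.1 hp
  obtain ⟨x, hx, hmin⟩ := exists_min_image U h hU
  obtain ⟨h1, h2⟩ := H.1 x hx
  have := hmin (p x) (by simpa using h1)
  omega

lemma IsHt_empty (R : Finset V) : IsHt R ∅ id 0 := by
  constructor <;> simp

lemma F_empty_right (R : Finset V) : F R (∅ : Finset V) = {id} := by
  ext p
  rw [mem_F, mem_singleton]
  constructor
  · rintro ⟨h, H⟩
    funext x
    exact (H.2 x (by simp)).1
  · rintro rfl
    exact ⟨0, IsHt_empty R⟩

lemma tot_down {R U D : Finset V} (hRU : Disjoint R U) {p : V → V} (hp : p ∈ F R U)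
    (hD : D = U.filter fun x => p x ∈ R) :
    tot R U p = tot D (U \ D) (fun x => if x ∈ D then x else p x) + U.card := by
  obtain ⟨h, H⟩ := mem_F.1 hp
  unfold tot
  rw [H.ht_eq, (H.down hRU hD).ht_eq]
  have : U.card = ∑ x, if x ∈ U then 1 else 0 := by simp
  rw [this, ← sum_add_distrib]
  apply sum_congr rfl
  intro x _
  by_cases hx : x ∈ U
  · have := (H.1 x hx).2
    simp [hx]; omega
  · have := (H.2 x hx).2
    simp [hx, this]

lemma count_both : ∀ (u : ℕ) (R U : Finset V), U.card = u → Disjoint R U →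
    (F R U).card = gc R.card u ∧ ∑ p ∈ F R U, tot R U p = hc R.card u := by
  intro u
  induction u using Nat.strong_induction_on with
  | _ u ih =>
  intro R U hU hRU
  rcases Nat.eq_zero_or_pos u with rfl | hpos
  · rw [card_eq_zero] at hU
    subst hU
    rw [F_empty_right]
    simp [gc, hc, tot, (IsHt_empty R).ht_eq]
  · obtain ⟨w, rfl⟩ : ∃ w, u = w + 1 := ⟨u - 1, by omega⟩
    have key : ∀ D ∈ U.powerset, (F D (U \ D)).card = gc D.card (w + 1 - D.card) ∧
        ∑ p ∈ F D (U \ D), tot D (U \ D) p = hc D.card (w + 1 - D.card) := by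
      intro D hD
      rw [mem_powerset] at hD
      have hc1 : (U \ D).card = w + 1 - D.card := by rw [card_sdiff_of_subset hD, hU]
      rcases D.eq_empty_or_nonempty with rfl | hne
      · rw [sdiff_empty, F_empty_left (card_pos.1 (by omega))]
        simp [gc, hc]
      · have := hne.card_pos
        exact ih _ (by omega) D (U \ D) hc1 disjoint_sdiff
    constructor
    · have := sum_F R U hRU (fun _ => 1) (fun _ _ => 1) (fun _ _ _ _ _ => rfl)
      rw [card_eq_sum_ones, this, gc_rec]
      have h2 : ∀ D ∈ U.powerset, R.card ^ D.card * ∑ p ∈ F D (U \ D), 1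
          = (fun j => R.card ^ j * gc j (w + 1 - j)) D.card := by
        intro D hD
        rw [← card_eq_sum_ones, (key D hD).1]
      rw [sum_congr rfl h2, sum_powerset_apply_card (fun j => R.card ^ j * gc j (w + 1 - j)), hU]
      simp
    · have : ∑ p ∈ F R U, tot R U p = ∑ D ∈ U.powerset, R.card ^ D.card *
          ∑ p ∈ F D (U \ D), (tot D (U \ D) p + (w + 1)) := by
        refine sum_F R U hRU _ (fun D p => tot D (U \ D) p + (w + 1)) ?_
        intro D _ p hp hpD
        rw [tot_down hRU hp hpD, hU]
      rw [this, hc_rec]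
      have h2 : ∀ D ∈ U.powerset, R.card ^ D.card * ∑ p ∈ F D (U \ D), (tot D (U \ D) p + (w + 1))
          = (fun j => R.card ^ j * (hc j (w + 1 - j) + (w + 1) * gc j (w + 1 - j))) D.card := by
        intro D hD
        rw [sum_add_distrib, (key D hD).2, sum_const, (key D hD).1]
        simp only [smul_eq_mul]
        ring
      rw [sum_congr rfl h2, sum_powerset_apply_card
        (fun j => R.card ^ j * (hc j (w + 1 - j) + (w + 1) * gc j (w + 1 - j))), hU]
      simp

end
end HT

namespace HT
open Finset

/-- The graph of a parent function. -/
def gr {V : Type*} (p : V → V) : SimpleGraph V where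
  Adj x y := x ≠ y ∧ (p x = y ∨ p y = x)
  symm := ⟨fun _ _ h => ⟨h.1.symm, h.2.symm⟩⟩
  loopless := ⟨fun _ h => h.1 rfl⟩

section
variable {V : Type*} [Fintype V] [DecidableEq V]

lemma IsHt.adj {r : V} {p : V → V} {h : V → ℕ} (H : IsHt {r} {r}ᶜ p h) {x : V} (hx : x ≠ r) :
    (gr p).Adj x (p x) := by
  have := (H.1 x (by simpa using hx)).2
  refine ⟨fun he => ?_, Or.inl rfl⟩
  rw [← he] at this
  omega

lemma IsHt.walk {r : V} {p : V → V} {h : V → ℕ} (H : IsHt {r} {r}ᶜ p h) :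
    ∀ k x, h x = k → ∃ w : (gr p).Walk x r, w.length = k := by
  intro k
  induction k with
  | zero =>
    intro x hx
    by_cases hxr : x = r
    · subst hxr; exact ⟨.nil, rfl⟩
    · have := (H.1 x (by simpa using hxr)).2; omega
  | succ k ih =>
    intro x hx
    by_cases hxr : x = r
    · have := (H.2 x (by simpa using hxr)).2; omega
    · have := (H.1 x (by simpa using hxr)).2
      obtain ⟨w, hw⟩ := ih (p x) (by omega)
      exact ⟨.cons (H.adj hxr) w, by simp [hw]⟩

lemma IsHt.le_of_walk {r : V} {p : V → V} {h : V → ℕ} (H : IsHt {r} {r}ᶜ p h)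
    {x y : V} (w : (gr p).Walk x y) : h x ≤ h y + w.length := by
  have step : ∀ x, h x ≤ h (p x) + 1 ∧ h (p x) ≤ h x := by
    intro x
    by_cases hxr : x = r
    · have := (H.2 x (by simpa using hxr)).1; rw [this]; omega
    · have := (H.1 x (by simpa using hxr)).2; omega
  induction w with
  | nil => simp
  | @cons a b c hab w ih =>
    rw [SimpleGraph.Walk.length_cons]
    have : h a ≤ h b + 1 := by
      rcases hab.2 with h1 | h1
      · have := (step a).1; rw [h1] at this; exact this
      · have := (step b).2; rw [h1] at this; omega
    omega

lemma IsHt.dist_eq {r : V} {p : V → V} {h : V → ℕ} (H : IsHt {r} {r}ᶜ p h) (x : V) :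
    (gr p).dist r x = h x := by
  have hr : h r = 0 := (H.2 r (by simp)).2
  obtain ⟨w, hw⟩ := H.walk _ x rfl
  rw [SimpleGraph.dist_comm]
  apply le_antisymm
  · rw [← hw]; exact SimpleGraph.dist_le w
  · obtain ⟨w', hw'⟩ := w.reachable.exists_walk_length_eq_dist
    have := H.le_of_walk w'
    omega

lemma IsHt.connected {r : V} {p : V → V} {h : V → ℕ} (H : IsHt {r} {r}ᶜ p h) :
    (gr p).Connected := by
  have hreach : ∀ x, (gr p).Reachable x r := fun x => (H.walk _ x rfl).choose.reachable
  have : Nonempty V := ⟨r⟩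
  exact ⟨fun x y => (hreach x).trans (hreach y).symm⟩

lemma IsHt.isTree {r : V} {p : V → V} {h : V → ℕ} (H : IsHt {r} {r}ᶜ p h) :
    (gr p).IsTree := by
  rw [SimpleGraph.isTree_iff_connected_and_card]
  refine ⟨H.connected, ?_⟩
  have h1 := H.connected.card_vert_le_card_edgeSet_add_one
  have h2 : (gr p).edgeSet ⊆ ((({r}ᶜ : Finset V).image fun x => s(x, p x) : Finset (Sym2 V)) : Set (Sym2 V)) := by
    intro e he
    induction e using Sym2.ind with
    | _ x y =>
    rw [SimpleGraph.mem_edgeSet] at he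
    have hfix : p r = r := (H.2 r (by simp)).1
    rw [mem_coe, mem_image]
    rcases he.2 with h3 | h3
    · refine ⟨x, ?_, by rw [h3]⟩
      simp only [mem_compl, mem_singleton]
      rintro rfl
      exact he.1 (hfix.symm.trans h3)
    · refine ⟨y, ?_, by rw [h3]; exact Sym2.eq_swap⟩
      simp only [mem_compl, mem_singleton]
      rintro rfl
      exact he.1 (hfix.symm.trans h3).symm
  have h3 := Nat.card_mono (Finset.finite_toSet _) h2
  have h4 := card_image_le (s := ({r}ᶜ : Finset V)) (f := fun x => s(x, p x))
  rw [card_compl, card_singleton] at h4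
  have h5 : 0 < Fintype.card V := Fintype.card_pos_iff.2 ⟨r⟩
  rw [Nat.card_eq_card_toFinset (SetLike.coe _), Finset.toFinset_coe] at h3
  rw [Nat.card_eq_fintype_card (α := V)] at h1 ⊢
  omega

lemma gr_inj {r : V} {p q : V → V} (hp : p ∈ F {r} {r}ᶜ) (hq : q ∈ F {r} {r}ᶜ)
    (h : gr p = gr q) : p = q := by
  obtain ⟨a, A⟩ := mem_F.1 hp
  obtain ⟨b, B⟩ := mem_F.1 hq
  have hab : a = b := by
    funext x
    rw [← A.dist_eq, ← B.dist_eq, h]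
  subst hab
  funext x
  by_cases hx : x = r
  · rw [(A.2 x (by simpa using hx)).1, (B.2 x (by simpa using hx)).1]
  · have h1 := A.adj hx
    rw [h] at h1
    rcases h1.2 with h2 | h2
    · exact h2.symm
    · exfalso
      have h3 := (A.1 x (by simpa using hx)).2
      by_cases hpr : p x = r
      · have := (B.2 (p x) (by simpa using hpr)).1
        rw [this] at h2
        exact h1.1 h2.symm
      · have := (B.1 (p x) (by simpa using hpr)).2
        rw [h2] at this
        omega

lemma gr_surj {T : SimpleGraph V} (hT : T.IsTree) (r : V) :
    ∃ p ∈ F {r} {r}ᶜ, gr p = T := by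
  have hex : ∀ x, ∃ y, (x ≠ r → T.Adj x y ∧ T.dist r x = T.dist r y + 1) ∧ (x = r → y = x) := by
    intro x
    by_cases hx : x = r
    · exact ⟨x, fun h => absurd hx h, fun _ => rfl⟩
    · obtain ⟨w, hw⟩ := hT.connected.exists_walk_length_eq_dist x r
      cases w with
      | nil => exact absurd rfl hx
      | @cons _ y _ hxy w =>
        refine ⟨y, fun _ => ⟨hxy, ?_⟩, fun h => absurd h hx⟩
        rw [SimpleGraph.Walk.length_cons] at hw
        have h1 := SimpleGraph.dist_le w
        have h2 := hxy.diff_dist_adj (u := r)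
        rw [SimpleGraph.dist_comm (u := r) (v := x), SimpleGraph.dist_comm (u := r) (v := y)] at *
        omega
  choose p hp using hex
  have H : IsHt {r} {r}ᶜ p (T.dist r) := by
    constructor
    · intro x hx
      have hx : x ≠ r := by simpa using hx
      refine ⟨?_, ((hp x).1 hx).2⟩
      simp only [mem_singleton, mem_compl]
      tauto
    · intro x hx
      have hx : x = r := by simpa using hx
      exact ⟨(hp x).2 hx, by rw [hx]; simp⟩
  refine ⟨p, mem_F.2 ⟨_, H⟩, ?_⟩
  have hle : gr p ≤ T := by
    intro x y hxy
    have aux : ∀ x, x ≠ p x → T.Adj x (p x) := by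
      intro x hne
      exact ((hp x).1 (fun h => hne ((hp x).2 h).symm)).1
    rcases hxy.2 with h | h
    · subst h; exact aux _ hxy.1
    · subst h; exact (aux _ hxy.1.symm).symm
  exact le_antisymm hle
    ((SimpleGraph.isTree_iff_minimal_connected.1 hT).2 H.connected hle)

end

lemma sum_trees (n : ℕ) :
    ∑ T : RootedLabeledTree n, totalHeight T = n * hc 1 (n - 1) := by
  have h1 : ∀ r : Fin n, ∑ p ∈ F {r} {r}ᶜ, tot {r} {r}ᶜ p = hc 1 (n - 1) := by
    intro r
    have := (count_both (n - 1) ({r} : Finset (Fin n)) {r}ᶜ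
      (by rw [card_compl]; simp) disjoint_compl_right).2
    rwa [card_singleton] at this
  have h2 : ∑ r : Fin n, ∑ p ∈ F {r} {r}ᶜ, tot {r} {r}ᶜ p = n * hc 1 (n - 1) := by
    rw [sum_congr rfl (fun r _ => h1 r)]; simp
  rw [← h2, sum_sigma']
  symm
  refine sum_bij (fun (s : (_ : Fin n) × (Fin n → Fin n)) hs =>
    (⟨(gr s.2, s.1), (mem_F.1 (mem_sigma.1 hs).2).choose_spec.isTree⟩ : RootedLabeledTree n))
    ?_ ?_ ?_ ?_
  · intros; exact mem_univ _
  · rintro ⟨r, p⟩ hp ⟨s, q⟩ hq he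
    have he := congrArg Subtype.val he
    simp only [Prod.mk.injEq] at he
    obtain ⟨h1, rfl⟩ := he
    have hpq : p = q := gr_inj (mem_sigma.1 hp).2 (mem_sigma.1 hq).2 h1
    rw [hpq]
  · rintro ⟨⟨T, r⟩, hT⟩ _
    obtain ⟨p, hp, rfl⟩ := gr_surj hT r
    exact ⟨⟨r, p⟩, mem_sigma.2 ⟨mem_univ _, hp⟩, rfl⟩
  · rintro ⟨r, p⟩ hp
    obtain ⟨h, H⟩ := mem_F.1 (mem_sigma.1 hp).2
    simp only at H
    unfold tot totalHeight
    simp only [H.ht_eq]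
    apply sum_congr rfl
    intro x _
    exact (H.dist_eq x).symm

end HT

/-- For `n ≥ 2`: `n! Σ_{k=0}^{n−2} n^k/k! = n · (n−1)! Σ_{k=0}^{n−2} n^k/k!`, and
`a(n) := (n−1)! Σ_{k=0}^{n−2} n^k/k!` satisfies `n·a(n) = Σ_T TotalHeight(T)`, the sum
of total heights over all rooted labeled trees on `n` vertices; moreover
`a(2)=1`, `a(3)=8`, `a(4)=78`, `a(5)=944`. -/
theorem A000435_spec :
    (∀ n : ℕ, 2 ≤ n →
      (n.factorial : ℚ) * ∑ k ∈ Finset.range (n - 1), (n : ℚ) ^ k / (k.factorial : ℚ)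
        = (n : ℚ) * a n ∧
      (n : ℚ) * a n = ∑ T : RootedLabeledTree n, (totalHeight T : ℚ)) ∧
    a 2 = 1 ∧ a 3 = 8 ∧ a 4 = 78 ∧ a 5 = 944 := by
  refine ⟨fun n hn => ⟨?_, ?_⟩, ?_, ?_, ?_, ?_⟩
  · unfold a
    rw [← mul_assoc, ← Nat.cast_mul, Nat.mul_factorial_pred (by omega)]
  · unfold a
    rw [HT.hc_final n hn, ← Nat.cast_mul, ← HT.sum_trees]
    push_cast
    rfl
  all_goals
    norm_num [a, Finset.sum_range_succ, Nat.factorial]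
end
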